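/- arXiv:2304.11121 — 4 statements merged into one kernel-verified Lean document; each statement's English description precedes it below -/
import Mathlib

section
/- Let σ, ρ : ℝ → ℝ be differentiable on [0, ∞) with |σ(0)| < ρ(0) and ρ(t) > 0 for all t ≥ 0. Assume: (i) for every t₁ > 0, if σ(t₁) = ρ(t₁) and |σ(t)| < ρ(t) for all t ∈ [0, t₁), then σ'(t₁) < ρ'(t₁); and (ii) for every t₁ > 0, if σ(t₁) = −ρ(t₁) and |σ(t)| < ρ(t) for all t ∈ [0, t₁), then σ'(t₁) > −ρ'(t₁). Then |σ(t)| < ρ(t) for all t ≥ 0. -/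
/-! If the constraint failed somewhere, compactness would give a first failure time `t₁ > 0`, and
continuity forces `|σ t₁| = ρ t₁` there. The gap `ρ - σ` or `ρ + σ` is then positive before `t₁`
and zero at `t₁`, so its derivative at `t₁` is nonpositive (`deriv_nonpos_of_first_zero`),
contradicting the inward-pointing hypotheses. -/

/-- The left difference quotients at `b` are nonpositive, hence so is their limit. -/
lemma deriv_nonpos_of_first_zero {g : ℝ → ℝ} {g' a b : ℝ} (hab : a < b)
    (hg : HasDerivAt g g' b) (hb : g b = 0) (hpos : ∀ t ∈ Set.Ico a b, 0 < g t) : g' ≤ 0 := by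
  have h := (hasDerivWithinAt_iff_tendsto_slope' (s := Set.Iio b) (by simp)).1
    hg.hasDerivWithinAt
  refine le_of_tendsto h ?_
  filter_upwards [Ico_mem_nhdsLT hab] with t ht
  rw [slope_def_field, hb]
  exact div_nonpos_of_nonneg_of_nonpos (by linarith [hpos t ht]) (by linarith [ht.2])

/-- Abstract barrier (invariance) lemma capturing the contradiction structure
of the proof of Theorem 1: if at any first instant where `σ` would touch the
time-varying bound `±ρ` its derivative strictly pushes it back inside the band,
then `|σ(t)| < ρ(t)` for all `t ≥ 0`. -/
theorem barrier_invariance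
    (σ ρ : ℝ → ℝ)
    (hσ : ∀ t ∈ Set.Ici (0 : ℝ), DifferentiableAt ℝ σ t)
    (hρ : ∀ t ∈ Set.Ici (0 : ℝ), DifferentiableAt ℝ ρ t)
    (h0 : |σ 0| < ρ 0) (hρpos : ∀ t ≥ (0 : ℝ), 0 < ρ t)
    (hup : ∀ t₁ > (0 : ℝ), σ t₁ = ρ t₁ →
      (∀ t ∈ Set.Ico (0 : ℝ) t₁, |σ t| < ρ t) → deriv σ t₁ < deriv ρ t₁)
    (hdown : ∀ t₁ > (0 : ℝ), σ t₁ = -ρ t₁ →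
      (∀ t ∈ Set.Ico (0 : ℝ) t₁, |σ t| < ρ t) → -deriv ρ t₁ < deriv σ t₁) :
    ∀ t ≥ (0 : ℝ), |σ t| < ρ t := by
  intro T hT
  by_contra hfail
  have hcont : ContinuousOn (fun t => |σ t| - ρ t) (Set.Icc 0 T) := fun t ht =>
    ((hσ t ht.1).continuousAt.abs.sub (hρ t ht.1).continuousAt).continuousWithinAt
  have hcomp : IsCompact (Set.Icc 0 T ∩ (fun t => |σ t| - ρ t) ⁻¹' Set.Ici 0) :=
    isCompact_Icc.of_isClosed_subset
      (hcont.preimage_isClosed_of_isClosed isClosed_Icc isClosed_Ici) Set.inter_subset_left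
  obtain ⟨t₁, ⟨⟨ht₁, ht₁T⟩, hge⟩, hleast⟩ := hcomp.exists_isLeast
    ⟨T, ⟨hT, le_rfl⟩, sub_nonneg.2 (not_lt.1 hfail)⟩
  have hge' : ρ t₁ ≤ |σ t₁| := sub_nonneg.1 hge
  have hbefore : ∀ t ∈ Set.Ico (0 : ℝ) t₁, |σ t| < ρ t := by
    intro t ht
    by_contra hn
    exact ht.2.not_ge (hleast ⟨⟨ht.1, ht.2.le.trans ht₁T⟩, sub_nonneg.2 (not_lt.1 hn)⟩)
  have hpos : 0 < t₁ := by
    refine lt_of_le_of_ne ht₁ ?_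
    rintro rfl
    exact h0.not_ge hge'
  have hσd := (hσ t₁ ht₁).hasDerivAt
  have hρd := (hρ t₁ ht₁).hasDerivAt
  have hle : |σ t₁| ≤ ρ t₁ := by
    refine le_of_tendsto_of_tendsto (b := nhdsWithin t₁ (Set.Iio t₁))
      (hσd.continuousAt.abs.tendsto.mono_left nhdsWithin_le_nhds)
      (hρd.continuousAt.tendsto.mono_left nhdsWithin_le_nhds) ?_
    filter_upwards [Ico_mem_nhdsLT hpos] with t ht using (hbefore t ht).le
  rcases eq_or_eq_neg_of_abs_eq (le_antisymm hle hge') with heq | heq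
  · have hd := deriv_nonpos_of_first_zero hpos (hρd.sub hσd) (by simp [heq])
      fun t ht => sub_pos.2 (abs_lt.1 (hbefore t ht)).2
    linarith [hup t₁ hpos heq hbefore]
  · have hd := deriv_nonpos_of_first_zero hpos (hρd.add hσd) (by simp [heq])
      fun t ht => by
        have := (abs_lt.1 (hbefore t ht)).1
        simp only [Pi.add_apply]
        linarith
    linarith [hdown t₁ hpos heq hbefore]
end

section
/- Let ρ₀, ρ∞, μ be positive real constants and define ρ(t) = ρ₀·exp(−μt) + ρ∞. Let σ : ℝ → ℝ be differentiable on [0, ∞) with |σ(0)| < ρ(0). Let F, g : ℝ → ℝ satisfy |F(t)| ≤ M for some constant M ≥ 0 and g(t) ≥ g̲ for some constant g̲ > 0, for all t ≥ 0. Assume that for every t ≥ 0 with |σ(t)| < ρ(t), the derivative satisfies σ'(t) = F(t) − g(t)·tan(π·σ(t)/(2·ρ(t))). Then |σ(t)| < ρ(t) for all t ≥ 0. -/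
/-!
If the bound failed, there would be a first time `T > 0` with `|σ T| = ρ T`; replacing `(σ, F)` by
`(-σ, -F)` if necessary, `σ T = ρ T`. As `t` increases to `T` the argument `π σ / (2 ρ)` tends
to `π / 2` from below, so the tangent blows up and, `g` being bounded below and `F` bounded, `σ'`
becomes at most `ρ'`, which is itself bounded below by `-μ ρ₀`. Hence `σ - ρ` is nonincreasing on some
`[t₁, T]`, which is incompatible with `σ t₁ < ρ t₁` and `σ T = ρ T`. The lemma
`ne_bound_of_forall_lt` is this barrier argument.
-/

open Real
open Filter Topology

/-- Barrier argument: a trajectory strictly inside the funnel `|σ| < ρ` on `[0, T)` does not touch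
the upper boundary at time `T`. -/
lemma ne_bound_of_forall_lt {σ ρ F g : ℝ → ℝ} {M L glow T : ℝ} (hT : 0 < T)
    (hσ : ∀ t ≥ (0 : ℝ), DifferentiableAt ℝ σ t) (hρ : Differentiable ℝ ρ)
    (hρpos : ∀ t, 0 < ρ t) (hρ' : ∀ t ≥ (0 : ℝ), -L ≤ deriv ρ t)
    (hF : ∀ t ≥ (0 : ℝ), |F t| ≤ M) (hglow : 0 < glow) (hg : ∀ t ≥ (0 : ℝ), glow ≤ g t)
    (hode : ∀ t ≥ (0 : ℝ), |σ t| < ρ t →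
      deriv σ t = F t - g t * Real.tan (π * σ t / (2 * ρ t)))
    (hin : ∀ t, 0 ≤ t → t < T → |σ t| < ρ t) : σ T ≠ ρ T := by
  intro heq
  have hpos : ∀ᶠ t in 𝓝[<] T, 0 < t ∧ t < T :=
    Ioo_mem_nhdsLT hT
  have harg : Tendsto (fun t => π * σ t / (2 * ρ t)) (𝓝[<] T) (𝓝[<] (π / 2)) := by
    refine tendsto_nhdsWithin_iff.2 ⟨?_, ?_⟩
    · have hc : ContinuousAt (fun t => π * σ t / (2 * ρ t)) T :=
        (continuousAt_const.mul (hσ T hT.le).continuousAt).div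
          (continuousAt_const.mul (hρ T).continuousAt) (by have := hρpos T; positivity)
      have hval : π * σ T / (2 * ρ T) = π / 2 := by
        have := (hρpos T).ne'
        rw [heq]
        field_simp
      have h := hc.tendsto
      simp only [hval] at h
      exact h.mono_left nhdsWithin_le_nhds
    · filter_upwards [hpos] with t ht
      have h1 := (abs_lt.1 (hin t ht.1.le ht.2)).2
      have h2 := hρpos t
      rw [Set.mem_Iio, div_lt_div_iff₀ (by positivity) two_pos]
      nlinarith [mul_lt_mul_of_pos_left h1 Real.pi_pos]
  -- The threshold `K` makes `glow * K` dominate `M + L`.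
  set K : ℝ := max 0 ((M + L) / glow) with hK
  have hev : ∀ᶠ t in 𝓝[<] T, K ≤ Real.tan (π * σ t / (2 * ρ t)) :=
    (Real.tendsto_tan_pi_div_two.comp harg).eventually_ge_atTop K
  obtain ⟨a, haT, ha⟩ := (mem_nhdsLT_iff_exists_Ioo_subset' hT).1 (hpos.and hev)
  obtain ⟨b, hab, hbT⟩ := exists_between (Set.mem_Iio.1 haT)
  have hb0 : 0 < b := (ha ⟨hab, hbT⟩).1.1
  have hanti : AntitoneOn (fun t => σ t - ρ t) (Set.Icc b T) := by
    refine antitoneOn_of_deriv_nonpos (convex_Icc b T) ?_ ?_ ?_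
    · intro t ht
      exact ((hσ t (hb0.le.trans ht.1)).sub (hρ t)).continuousAt.continuousWithinAt
    · intro t ht
      rw [interior_Icc] at ht
      exact ((hσ t (hb0.trans ht.1).le).sub (hρ t)).differentiableWithinAt
    · intro t ht
      rw [interior_Icc] at ht
      have ht0 : 0 ≤ t := (hb0.trans ht.1).le
      have htan : K ≤ Real.tan (π * σ t / (2 * ρ t)) := (ha ⟨hab.trans ht.1, ht.2⟩).2
      rw [deriv_fun_sub (hσ t ht0) (hρ t), hode t ht0 (hin t ht0 ht.2)]
      have hprod : glow * K ≤ g t * Real.tan (π * σ t / (2 * ρ t)) :=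
        mul_le_mul (hg t ht0) htan (le_max_left _ _) (hglow.le.trans (hg t ht0))
      have hKL : M + L ≤ glow * K := by
        have h := mul_le_mul_of_nonneg_left (le_max_right 0 ((M + L) / glow)) hglow.le
        rwa [mul_div_cancel₀ _ hglow.ne'] at h
      linarith [hρ' t ht0, (abs_le.1 (hF t ht0)).2]
  have hle := hanti (Set.left_mem_Icc.2 hbT.le) (Set.right_mem_Icc.2 hbT.le) hbT.le
  have hlt := (abs_lt.1 (hin b hb0.le hbT)).2
  simp only at hle
  linarith

/-- Abstract form of the reaching-law part of Theorem 1: if along trajectories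
`σ' = F - g · tan(π σ / (2 ρ))` with `F` bounded, `g` bounded below by a
positive constant, `ρ(t) = ρ₀ exp(-μ t) + ρInf`, and `|σ(0)| < ρ(0)`, then
`|σ(t)| < ρ(t)` for all `t ≥ 0`. -/
theorem reaching_law
    (ρ₀ ρInf μ : ℝ) (hρ₀ : 0 < ρ₀) (hρInf : 0 < ρInf) (hμ : 0 < μ)
    (σ F g : ℝ → ℝ)
    (hσdiff : ∀ t ∈ Set.Ici (0 : ℝ), DifferentiableAt ℝ σ t)
    (M : ℝ) (hM : 0 ≤ M) (hF : ∀ t ≥ (0 : ℝ), |F t| ≤ M)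
    (glow : ℝ) (hglow : 0 < glow) (hg : ∀ t ≥ (0 : ℝ), glow ≤ g t)
    (h0 : |σ 0| < ρ₀ * Real.exp (-μ * 0) + ρInf)
    (hode : ∀ t ≥ (0 : ℝ), |σ t| < ρ₀ * Real.exp (-μ * t) + ρInf →
      deriv σ t = F t - g t * Real.tan (π * σ t / (2 * (ρ₀ * Real.exp (-μ * t) + ρInf)))) :
    ∀ t ≥ (0 : ℝ), |σ t| < ρ₀ * Real.exp (-μ * t) + ρInf := by
  set ρ : ℝ → ℝ := fun t => ρ₀ * Real.exp (-μ * t) + ρInf with hρdef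
  have hρd : ∀ t, HasDerivAt ρ (ρ₀ * (Real.exp (-μ * t) * (-μ * 1))) t := fun t =>
    ((((hasDerivAt_id t).const_mul (-μ)).exp).const_mul ρ₀).add_const ρInf
  have hρdiff : Differentiable ℝ ρ := fun t => (hρd t).differentiableAt
  have hρpos : ∀ t, 0 < ρ t := fun t => by simp only [hρdef]; positivity
  have hρ' : ∀ t ≥ (0 : ℝ), -(ρ₀ * μ) ≤ deriv ρ t := by
    intro t ht
    rw [(hρd t).deriv]
    have hexp : Real.exp (-μ * t) ≤ 1 := Real.exp_le_one_iff.2 (by nlinarith)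
    nlinarith [mul_le_mul_of_nonneg_left hexp (mul_pos hρ₀ hμ).le]
  have hσc : ContinuousOn σ (Set.Ici 0) := fun t ht =>
    (hσdiff t ht).continuousAt.continuousWithinAt
  intro t ht
  change |σ t| < ρ t
  by_contra hcon
  -- `T` is the first time in `[0, t]` at which the bound fails.
  have hclosed : IsClosed {s ∈ Set.Icc 0 t | ρ s ≤ |σ s|} :=
    isClosed_Icc.isClosed_le hρdiff.continuous.continuousOn
      (hσc.mono Set.Icc_subset_Ici_self).abs
  have hcomp : IsCompact {s ∈ Set.Icc 0 t | ρ s ≤ |σ s|} :=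
    isCompact_Icc.of_isClosed_subset hclosed (Set.sep_subset _ _)
  obtain ⟨T, ⟨⟨hT0, hTt⟩, hTge⟩, hTmin⟩ :=
    hcomp.exists_isLeast ⟨t, ⟨ht, le_rfl⟩, not_lt.1 hcon⟩
  have hTpos : 0 < T := by
    rcases hT0.eq_or_lt with h | h
    · rw [← h] at hTge
      exact absurd h0 (not_lt.2 hTge)
    · exact h
  have hin : ∀ s, 0 ≤ s → s < T → |σ s| < ρ s := by
    intro s hs hsT
    by_contra h
    exact absurd (hTmin ⟨⟨hs, hsT.le.trans hTt⟩, not_lt.1 h⟩) (not_le.2 hsT)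
  have hTle : |σ T| ≤ ρ T := by
    refine le_of_tendsto_of_tendsto
      ((hσdiff T hT0).continuousAt.abs.tendsto.mono_left nhdsWithin_le_nhds)
      ((hρdiff T).continuousAt.tendsto.mono_left nhdsWithin_le_nhds)
      (?_ : ∀ᶠ s in 𝓝[<] T, |σ s| ≤ ρ s)
    filter_upwards [Ioo_mem_nhdsLT hTpos] with s hs
    exact (hin s hs.1.le hs.2).le
  rcases (abs_eq (hρpos T).le).1 (le_antisymm hTle hTge) with h | h
  · exact ne_bound_of_forall_lt hTpos hσdiff hρdiff hρpos hρ' hF hglow hg hode hin h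
  · refine ne_bound_of_forall_lt (σ := fun s => -σ s) (F := fun s => -F s) (M := M) hTpos
      (fun s hs => (hσdiff s hs).neg) hρdiff hρpos hρ' (fun s hs => ?_) hglow hg
      (fun s hs hlt => ?_) (fun s hs hsT => ?_) ?_
    · rw [abs_neg]
      exact hF s hs
    · rw [abs_neg] at hlt
      rw [deriv.fun_neg, hode s hs hlt, mul_neg, neg_div, Real.tan_neg]
      ring
    · rw [abs_neg]
      exact hin s hs hsT
    · rw [h, neg_neg]
end

section
/- Let n ≥ 1, a > 0, ε ≥ 0, and let e : ℝ → ℝ be infinitely differentiable (smooth). Define the operator L on smooth functions by (L f)(t) = f'(t) + a·f(t), and let σ = L^{n−1} e (the (n−1)-fold iterate of L applied to e). Assume the i-th derivative of e at 0 vanishes, e^{(i)}(0) = 0, for all i = 0, 1, …, n − 1, and that |σ(t)| ≤ ε for all t ≥ 0. Then for each i = 0, 1, …, n − 1 and all t ≥ 0, the i-th derivative of e satisfies |e^{(i)}(t)| ≤ (2a)^i · ε / a^{n−1}. -/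
/-!
Write `L f = f' + a f`. If `f 0 = 0` and `|L f| ≤ M` on `[0, ∞)`, then `exp (a t) (f t - M / a)` is
antitone there, which gives `|f| ≤ M / a` (`abs_le_of_abs_deriv_add_mul_le`). The bound follows by
induction on the number `m` of iterations of `L` (`abs_iteratedDeriv_le_of_iterate`): since
`L^[m+1] e = L^[m] (L e)`, the induction hypothesis bounds all derivatives of `L e` up to order `m`;
the first-order estimate bounds `e`, and `e^(i+1) = (L e)^(i) - a e^(i)` bounds the higher derivatives
in turn, each of the two terms contributing half of the factor `2 a`.
-/

lemma le_of_deriv_add_mul_le {a M : ℝ} (ha : 0 < a) (hM : 0 ≤ M) {f : ℝ → ℝ}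
    (hf : Differentiable ℝ f) (h0 : f 0 = 0) (h : ∀ t ≥ (0 : ℝ), deriv f t + a * f t ≤ M) :
    ∀ t ≥ (0 : ℝ), f t ≤ M / a := by
  have hd : ∀ t, HasDerivAt (fun t => Real.exp (a * t) * (f t - M / a))
      (Real.exp (a * t) * (deriv f t + a * f t - M)) t := by
    intro t
    have h1 : HasDerivAt (fun t => Real.exp (a * t)) (Real.exp (a * t) * (a * 1)) t :=
      ((hasDerivAt_id t).const_mul a).exp
    have h2 := h1.mul ((hf t).hasDerivAt.sub_const (M / a))
    refine h2.congr_deriv ?_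
    field_simp
    ring
  have hanti : AntitoneOn (fun t => Real.exp (a * t) * (f t - M / a)) (Set.Ici 0) := by
    refine antitoneOn_of_deriv_nonpos (convex_Ici 0)
      (fun t _ => (hd t).continuousAt.continuousWithinAt)
      (fun t _ => (hd t).differentiableAt.differentiableWithinAt) ?_
    intro t ht
    rw [interior_Ici] at ht
    rw [(hd t).deriv]
    exact mul_nonpos_of_nonneg_of_nonpos (Real.exp_pos _).le
      (by linarith [h t (le_of_lt ht)])
  intro t ht
  have h1 := hanti (Set.mem_Ici.2 le_rfl) (Set.mem_Ici.2 ht) ht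
  simp only [mul_zero, Real.exp_zero, h0, one_mul, zero_sub] at h1
  have h2 : 0 ≤ M / a := by positivity
  by_contra! hlt
  have h3 : 0 < Real.exp (a * t) * (f t - M / a) := mul_pos (Real.exp_pos _) (by linarith)
  linarith

lemma abs_le_of_abs_deriv_add_mul_le {a M : ℝ} (ha : 0 < a) (hM : 0 ≤ M) {f : ℝ → ℝ}
    (hf : Differentiable ℝ f) (h0 : f 0 = 0) (h : ∀ t ≥ (0 : ℝ), |deriv f t + a * f t| ≤ M) :
    ∀ t ≥ (0 : ℝ), |f t| ≤ M / a := by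
  intro t ht
  refine abs_le'.2 ⟨le_of_deriv_add_mul_le ha hM hf h0 (fun s hs => (abs_le'.1 (h s hs)).1) t ht, ?_⟩
  refine le_of_deriv_add_mul_le (f := fun s => -f s) ha hM hf.neg (by simp [h0]) (fun s hs => ?_) t ht
  have h1 := (abs_le'.1 (h s hs)).2
  rw [deriv.fun_neg]
  linarith

lemma iteratedDeriv_deriv_add_mul (a : ℝ) {f : ℝ → ℝ} (hf : ContDiff ℝ (⊤ : ℕ∞) f) (i : ℕ) (t : ℝ) :
    iteratedDeriv i (fun t => deriv f t + a * f t) t =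
      iteratedDeriv (i + 1) f t + a * iteratedDeriv i f t := by
  have h1 : ContDiff ℝ (⊤ : ℕ∞) (deriv f) := (contDiff_infty_iff_deriv.1 hf).2
  have hi : (i : WithTop ℕ∞) ≤ ((⊤ : ℕ∞) : WithTop ℕ∞) := by exact_mod_cast le_top
  rw [iteratedDeriv_fun_add (h1.of_le hi).contDiffAt
    ((contDiff_const.mul hf).of_le hi).contDiffAt, iteratedDeriv_succ',
    iteratedDeriv_const_mul_field]

/-- The tracking bound for `m` iterations of `d/dt + a`; only the derivatives of order `< m` need to
vanish at `0`. -/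
lemma abs_iteratedDeriv_le_of_iterate {a ε : ℝ} (ha : 0 < a) (hε : 0 ≤ ε) (m : ℕ) :
    ∀ e : ℝ → ℝ, ContDiff ℝ (⊤ : ℕ∞) e → (∀ i < m, iteratedDeriv i e 0 = 0) →
      (∀ t ≥ (0 : ℝ), |(fun f : ℝ → ℝ => fun t => deriv f t + a * f t)^[m] e t| ≤ ε) →
      ∀ i ≤ m, ∀ t ≥ (0 : ℝ), |iteratedDeriv i e t| ≤ (2 * a) ^ i * ε / a ^ m := by
  induction m with
  | zero =>
    intro e _ _ hb i hi t ht
    obtain rfl : i = 0 := by omega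
    simpa using hb t ht
  | succ m ih =>
    intro e he hinit hb
    have hLe : ContDiff ℝ (⊤ : ℕ∞) (fun t => deriv e t + a * e t) :=
      (contDiff_infty_iff_deriv.1 he).2.add (contDiff_const.mul he)
    have hL := ih (fun t => deriv e t + a * e t) hLe
      (fun i hi => by
        rw [iteratedDeriv_deriv_add_mul a he, hinit i (by omega), hinit (i + 1) (by omega)]
        simp)
      (fun t ht => by simpa only [Function.iterate_succ_apply] using hb t ht)
    intro i
    induction i with
    | zero =>
      intro _ t ht
      have h := abs_le_of_abs_deriv_add_mul_le (M := ε / a ^ m) ha (by positivity)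
        (contDiff_infty_iff_deriv.1 he).1 (by simpa using hinit 0 (by omega))
        (fun s hs => by simpa using hL 0 (by omega) s hs) t ht
      simpa [pow_succ, div_div] using h
    | succ i ihi =>
      intro hi t ht
      have h1 := hL i (by omega) t ht
      have h2 := ihi (by omega) t ht
      rw [iteratedDeriv_deriv_add_mul a he] at h1
      calc |iteratedDeriv (i + 1) e t|
          = |(iteratedDeriv (i + 1) e t + a * iteratedDeriv i e t)
              - a * iteratedDeriv i e t| := by ring_nf
        _ ≤ |iteratedDeriv (i + 1) e t + a * iteratedDeriv i e t|
              + |a * iteratedDeriv i e t| := abs_sub _ _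
        _ ≤ (2 * a) ^ i * ε / a ^ m + a * ((2 * a) ^ i * ε / a ^ (m + 1)) := by
            rw [abs_mul, abs_of_pos ha]
            gcongr
        _ = (2 * a) ^ (i + 1) * ε / a ^ (m + 1) := by
            field_simp
            ring

/-- Tracking bound from Slotine and Li, Chapter 7 (zero initial error): with
`σ = (d/dt + a)^{n-1} e`, zero initial error derivatives, and `|σ(t)| ≤ ε` on
`[0, ∞)`, each derivative satisfies `|e^{(i)}(t)| ≤ (2a)^i ε / a^{n-1}`. -/
theorem sliding_tracking_bound
    (n : ℕ) (hn : 1 ≤ n) (a ε : ℝ) (ha : 0 < a) (hε : 0 ≤ ε)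
    (e : ℝ → ℝ) (he : ContDiff ℝ (⊤ : ℕ∞) e)
    (σ : ℝ → ℝ)
    (hσ : σ = (fun f : ℝ → ℝ => fun t => deriv f t + a * f t)^[n - 1] e)
    (hinit : ∀ i ≤ n - 1, iteratedDeriv i e 0 = 0)
    (hσbnd : ∀ t ≥ (0 : ℝ), |σ t| ≤ ε) :
    ∀ i ≤ n - 1, ∀ t ≥ (0 : ℝ),
      |iteratedDeriv i e t| ≤ (2 * a) ^ i * ε / a ^ (n - 1) := by
  subst hσ
  exact abs_iteratedDeriv_le_of_iterate ha hε (n - 1) e he (fun i hi => hinit i hi.le) hσbnd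
end

section
/- Let n ≥ 1, a > 0, ε ≥ 0, and let e : ℝ → ℝ be infinitely differentiable (smooth). Define the operator L on smooth functions by (L f)(t) = f'(t) + a·f(t), and let σ = L^{n−1} e. If |σ(t)| ≤ ε for all t ≥ 0, then for each i = 0, 1, …, n − 1 and every δ > 0, there exists T ≥ 0 such that |e^{(i)}(t)| ≤ (2a)^i · ε / a^{n−1} + δ for all t ≥ T. -/
/-!
Write `L f = f' + a f`. The integrating factor `exp (a t)` shows that an asymptotic bound
`limsup |L f| ≤ C` gives `limsup |f| ≤ C / a` whatever the initial value of `f`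
(`AsympBound.of_filter`), and then `f' = L f - a f` gives `limsup |f'| ≤ 2 C`
(`AsympBound.deriv_of_filter`). Since `L` commutes with differentiation, induction on the number `m`
of factors `L` (`asympBound_iteratedDeriv`) does the rest: with one more factor, the bounds on
`(L e)^(i) = L (e^(i))`, `i ≤ m`, yield those on `e^(i)` by the first estimate, and the one new
derivative `e^(m+1) = (e^(m))'` is bounded by the second.
-/

open Filter Topology

/-- `limsup |f t| ≤ C` as `t → ∞`, in ε-form (so no boundedness side conditions arise). -/
def AsympBound (f : ℝ → ℝ) (C : ℝ) : Prop :=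
  ∀ δ > (0 : ℝ), ∀ᶠ t in atTop, |f t| ≤ C + δ

/-- One-sided comparison: `exp (a t) (f t - K)` is nonincreasing once `f' + a f ≤ a K`. -/
lemma eventually_le_of_filter_le {a K δ : ℝ} (ha : 0 < a) (hδ : 0 < δ) {f : ℝ → ℝ}
    (hf : Differentiable ℝ f) (h : ∀ᶠ t in atTop, deriv f t + a * f t ≤ a * K) :
    ∀ᶠ t in atTop, f t ≤ K + δ := by
  obtain ⟨T, hT⟩ := eventually_atTop.1 h
  have hder : ∀ t, HasDerivAt (fun t => Real.exp (a * t) * (f t - K))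
      (Real.exp (a * t) * (deriv f t + a * f t - a * K)) t := by
    intro t
    have h1 : HasDerivAt (fun t => Real.exp (a * t)) (Real.exp (a * t) * (a * 1)) t :=
      ((hasDerivAt_id t).const_mul a).exp
    refine (h1.mul ((hf t).hasDerivAt.sub_const K)).congr_deriv ?_
    ring
  have hanti : AntitoneOn (fun t => Real.exp (a * t) * (f t - K)) (Set.Ici T) := by
    refine antitoneOn_of_deriv_nonpos (convex_Ici T)
      (fun t _ => (hder t).continuousAt.continuousWithinAt)
      (fun t _ => (hder t).differentiableAt.differentiableWithinAt) ?_
    intro t ht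
    rw [interior_Ici] at ht
    rw [(hder t).deriv]
    have := hT t (le_of_lt ht)
    exact mul_nonpos_of_nonneg_of_nonpos (Real.exp_pos _).le (by linarith)
  have hlim : Tendsto (fun t : ℝ => Real.exp (-(a * t)) * (Real.exp (a * T) * (f T - K)))
      atTop (𝓝 (0 * (Real.exp (a * T) * (f T - K)))) :=
    (Real.tendsto_exp_neg_atTop_nhds_zero.comp (tendsto_id.const_mul_atTop ha)).mul_const _
  rw [zero_mul] at hlim
  filter_upwards [hlim.eventually_lt_const hδ, eventually_ge_atTop T] with t h1 h2
  have h3 := mul_le_mul_of_nonneg_left (hanti Set.self_mem_Ici h2 h2) (Real.exp_pos (-(a * t))).le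
  have h4 : Real.exp (-(a * t)) * (Real.exp (a * t) * (f t - K)) = f t - K := by
    rw [← mul_assoc, ← Real.exp_add]; simp
  simp only [h4] at h3
  linarith

lemma AsympBound.of_filter {a C : ℝ} (ha : 0 < a) {f : ℝ → ℝ} (hf : Differentiable ℝ f)
    (h : AsympBound (fun t => deriv f t + a * f t) C) : AsympBound f (C / a) := by
  intro δ hδ
  have hK : a * (C / a + δ / 2) = C + a * δ / 2 := by field_simp
  have hC := h (a * δ / 2) (by positivity)
  have hup := eventually_le_of_filter_le (K := C / a + δ / 2) ha (half_pos hδ) hf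
    (by filter_upwards [hC] with t ht; rw [hK]; exact (abs_le.1 ht).2)
  have hlo := eventually_le_of_filter_le (K := C / a + δ / 2) ha (half_pos hδ) hf.neg
    (by
      filter_upwards [hC] with t ht
      rw [hK, deriv.neg, Pi.neg_apply]
      linarith [(abs_le.1 ht).1])
  filter_upwards [hup, hlo] with t h1 h2
  rw [Pi.neg_apply] at h2
  exact abs_le.2 ⟨by linarith, by linarith⟩

lemma AsympBound.deriv_of_filter {a C : ℝ} (ha : 0 < a) {f : ℝ → ℝ} (hf : Differentiable ℝ f)
    (h : AsympBound (fun t => deriv f t + a * f t) C) : AsympBound (deriv f) (2 * C) := by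
  intro δ hδ
  filter_upwards [h (δ / 2) (half_pos hδ), h.of_filter ha hf (δ / (2 * a)) (by positivity)]
    with t h1 h2
  have h3 : a * |f t| ≤ C + δ / 2 := by
    calc a * |f t| ≤ a * (C / a + δ / (2 * a)) := by gcongr
      _ = C + δ / 2 := by field_simp
  have h4 : |a * f t| = a * |f t| := by rw [abs_mul, abs_of_pos ha]
  rw [← h4] at h3
  rw [abs_le] at *
  constructor <;> linarith

lemma asympBound_iteratedDeriv {a C : ℝ} (ha : 0 < a) (m : ℕ) :
    ∀ e : ℝ → ℝ, ContDiff ℝ (⊤ : ℕ∞) e →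
      AsympBound ((fun f : ℝ → ℝ => fun t => deriv f t + a * f t)^[m] e) C →
      ∀ i ≤ m, AsympBound (iteratedDeriv i e) ((2 * a) ^ i * C / a ^ m) := by
  induction m with
  | zero =>
    intro e _ h i hi
    obtain rfl : i = 0 := by omega
    simpa using h
  | succ m ih =>
    intro e he h i hi
    rw [Function.iterate_succ_apply] at h
    have hde : ContDiff ℝ (⊤ : ℕ∞) (deriv e) := (contDiff_infty_iff_deriv.1 he).2
    have hLe : ContDiff ℝ (⊤ : ℕ∞) (fun t => deriv e t + a * e t) :=
      hde.add (contDiff_const.mul he)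
    have hdiff : ∀ j, Differentiable ℝ (iteratedDeriv j e) := fun j =>
      he.differentiable_iteratedDeriv j (by exact_mod_cast WithTop.coe_lt_top j)
    -- `L` commutes with `d/dt`, so the induction hypothesis bounds `L (e^(j))`.
    have key : ∀ j ≤ m, AsympBound
        (fun t => deriv (iteratedDeriv j e) t + a * iteratedDeriv j e t)
        ((2 * a) ^ j * C / a ^ m) := by
      intro j hj
      have hcomm : iteratedDeriv j (fun t => deriv e t + a * e t)
          = fun t => deriv (iteratedDeriv j e) t + a * iteratedDeriv j e t := by
        funext t
        have hj' : ((j : ℕ∞) : WithTop ℕ∞) ≤ ((⊤ : ℕ∞) : WithTop ℕ∞) := by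
          exact_mod_cast le_top
        have h1 : ContDiffAt ℝ j e t := (he.of_le hj').contDiffAt
        have h2 : ContDiffAt ℝ j (deriv e) t := (hde.of_le hj').contDiffAt
        rw [iteratedDeriv_fun_add h2 (contDiffAt_const.mul h1), iteratedDeriv_const_mul_field,
          ← iteratedDeriv_succ', iteratedDeriv_succ]
      rw [← hcomm]
      exact ih _ hLe h j hj
    rcases Nat.lt_or_ge m i with hlt | hle
    · obtain rfl : i = m + 1 := by omega
      have h1 := (key m le_rfl).deriv_of_filter ha (hdiff m)
      rw [← iteratedDeriv_succ] at h1
      convert h1 using 1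
      field_simp
      ring
    · have h1 := (key i hle).of_filter ha (hdiff i)
      convert h1 using 1
      field_simp
      ring

/-- Asymptotic tracking bound from Slotine and Li, Chapter 7 (arbitrary initial
error): with `σ = (d/dt + a)^{n-1} e` and `|σ(t)| ≤ ε` on `[0, ∞)`, every
derivative bound `|e^{(i)}(t)| ≤ (2a)^i ε / a^{n-1}` is achieved asymptotically:
for every `δ > 0` the trajectory enters the δ-enlarged residual set in finite
time. -/
theorem sliding_tracking_bound_asymptotic
    (n : ℕ) (hn : 1 ≤ n) (a ε : ℝ) (ha : 0 < a) (hε : 0 ≤ ε)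
    (e : ℝ → ℝ) (he : ContDiff ℝ (⊤ : ℕ∞) e)
    (σ : ℝ → ℝ)
    (hσ : σ = (fun f : ℝ → ℝ => fun t => deriv f t + a * f t)^[n - 1] e)
    (hσbnd : ∀ t ≥ (0 : ℝ), |σ t| ≤ ε) :
    ∀ i ≤ n - 1, ∀ δ > (0 : ℝ), ∃ T ≥ (0 : ℝ), ∀ t ≥ T,
      |iteratedDeriv i e t| ≤ (2 * a) ^ i * ε / a ^ (n - 1) + δ := by
  intro i hi δ hδ
  have h0 : AsympBound ((fun f : ℝ → ℝ => fun t => deriv f t + a * f t)^[n - 1] e) ε := by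
    intro η hη
    filter_upwards [eventually_ge_atTop 0] with t ht
    rw [← hσ]
    linarith [hσbnd t ht]
  obtain ⟨T, hT⟩ := eventually_atTop.1 (asympBound_iteratedDeriv ha (n - 1) e he h0 i hi δ hδ)
  exact ⟨max T 0, le_max_right _ _, fun t ht => hT t (le_trans (le_max_left _ _) ht)⟩
end
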